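/- The ring of invariants F[V]^{SL_2(F_q)} is generated as an F-algebra by Δ, J, Γ and B, and there exists a polynomial Φ in three variables over F such that B² = Δ^q·Γ² + J·Φ(Δ, J, Γ); in particular J divides B² − Δ^q·Γ² in F[V]. -/

import Mathlib

open MvPolynomial
open scoped Classical

/-- The algebra automorphism of `F[a0,a1,a2]` induced by the upper-triangular matrix `σ_c`:
`a0 ↦ a0`, `a1 ↦ a1 + c·a0`, `a2 ↦ a2 + 2c·a1 + c²·a0`.  Here `a_i = X i`. -/
noncomputable def σP (F : Type*) [Field F] (c : F) :
    MvPolynomial (Fin 3) F →ₐ[F] MvPolynomial (Fin 3) F :=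
  aeval ![X 0, X 1 + C c * X 0, X 2 + C (2 * c) * X 1 + C (c ^ 2) * X 0]

/-- The algebra automorphism of `F[a0,a1,a2]` induced by `τ`: `a0 ↦ a2`, `a1 ↦ -a1`, `a2 ↦ a0`. -/
noncomputable def τA (F : Type*) [Field F] :
    MvPolynomial (Fin 3) F →ₐ[F] MvPolynomial (Fin 3) F :=
  aeval ![X 2, -X 1, X 0]

section Substitutions

variable (F : Type*) [Field F]

/-- The substitution `a0 ↦ m·a0`, `a1 ↦ a1`, `a2 ↦ m⁻¹·a2`. -/
noncomputable def torusHom (m : F) : MvPolynomial (Fin 3) F →ₐ[F] MvPolynomial (Fin 3) F :=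
  aeval ![C m * X 0, X 1, C m⁻¹ * X 2]

/-- The reflection `a1 ↦ -a1` fixing `a0` and `a2`. -/
noncomputable def flipHom : MvPolynomial (Fin 3) F →ₐ[F] MvPolynomial (Fin 3) F :=
  aeval ![X 0, -X 1, X 2]

/-- Restriction to the hyperplane `a0 = 0`. -/
noncomputable def restrictHom : MvPolynomial (Fin 3) F →ₐ[F] MvPolynomial (Fin 3) F :=
  aeval ![0, X 1, X 2]

/-- Restriction to the line `a0 = a2 = 0`. -/
noncomputable def axisHom : MvPolynomial (Fin 3) F →ₐ[F] MvPolynomial (Fin 3) F :=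
  aeval ![0, X 1, 0]

variable {F}

@[simp] lemma σP_X_zero (c : F) : σP F c (X 0) = X 0 := by simp [σP]
@[simp] lemma σP_X_one (c : F) : σP F c (X 1) = X 1 + C c * X 0 := by simp [σP]
@[simp] lemma σP_X_two (c : F) :
    σP F c (X 2) = X 2 + (C c * X 1 + C c * X 1) + C c ^ 2 * X 0 := by
  simp [σP, two_mul, add_mul]
@[simp] lemma σP_C (c a : F) : σP F c (C a) = C a := (σP F c).commutes a
@[simp] lemma τA_X_zero : τA F (X 0) = X 2 := by simp [τA]
@[simp] lemma τA_X_one : τA F (X 1) = -X 1 := by simp [τA]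
@[simp] lemma τA_X_two : τA F (X 2) = X 0 := by simp [τA]
@[simp] lemma τA_C (a : F) : τA F (C a) = C a := (τA F).commutes a
@[simp] lemma torusHom_X_zero (m : F) : torusHom F m (X 0) = C m * X 0 := by simp [torusHom]
@[simp] lemma torusHom_X_one (m : F) : torusHom F m (X 1) = X 1 := by simp [torusHom]
@[simp] lemma torusHom_X_two (m : F) : torusHom F m (X 2) = C m⁻¹ * X 2 := by simp [torusHom]
@[simp] lemma torusHom_C (m a : F) : torusHom F m (C a) = C a := (torusHom F m).commutes a
@[simp] lemma flipHom_X_zero : flipHom F (X 0) = X 0 := by simp [flipHom]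
@[simp] lemma flipHom_X_one : flipHom F (X 1) = -X 1 := by simp [flipHom]
@[simp] lemma flipHom_X_two : flipHom F (X 2) = X 2 := by simp [flipHom]
@[simp] lemma flipHom_C (a : F) : flipHom F (C a) = C a := (flipHom F).commutes a
@[simp] lemma restrictHom_X_zero : restrictHom F (X 0) = 0 := by simp [restrictHom]
@[simp] lemma restrictHom_X_one : restrictHom F (X 1) = X 1 := by simp [restrictHom]
@[simp] lemma restrictHom_X_two : restrictHom F (X 2) = X 2 := by simp [restrictHom]
@[simp] lemma restrictHom_C (a : F) : restrictHom F (C a) = C a := (restrictHom F).commutes a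
@[simp] lemma axisHom_X_zero : axisHom F (X 0) = 0 := by simp [axisHom]
@[simp] lemma axisHom_X_one : axisHom F (X 1) = X 1 := by simp [axisHom]
@[simp] lemma axisHom_X_two : axisHom F (X 2) = 0 := by simp [axisHom]
@[simp] lemma axisHom_C (a : F) : axisHom F (C a) = C a := (axisHom F).commutes a

/-- Two endomorphisms of the polynomial ring agree if they agree on the three variables. -/
lemma algHom_eq_of_vars {A : Type*} [CommSemiring A] [Algebra F A]
    {φ ψ : MvPolynomial (Fin 3) F →ₐ[F] A} (h0 : φ (X 0) = ψ (X 0)) (h1 : φ (X 1) = ψ (X 1))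
    (h2 : φ (X 2) = ψ (X 2)) : φ = ψ := by
  ext i
  fin_cases i
  exacts [h0, h1, h2]

/-- An endomorphism congruent to the identity modulo `ℓ` on the variables is so everywhere. -/
lemma dvd_sub_of_dvd_sub_vars {φ : MvPolynomial (Fin 3) F →ₐ[F] MvPolynomial (Fin 3) F}
    {ℓ : MvPolynomial (Fin 3) F} (h0 : ℓ ∣ X 0 - φ (X 0)) (h1 : ℓ ∣ X 1 - φ (X 1))
    (h2 : ℓ ∣ X 2 - φ (X 2)) (f : MvPolynomial (Fin 3) F) : ℓ ∣ f - φ f := by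
  have key : Ideal.Quotient.mkₐ F (Ideal.span {ℓ}) =
      (Ideal.Quotient.mkₐ F (Ideal.span {ℓ})).comp φ := by
    apply algHom_eq_of_vars <;>
    · simp only [AlgHom.comp_apply, Ideal.Quotient.mkₐ_eq_mk]
      rwa [Ideal.Quotient.eq, Ideal.mem_span_singleton]
  have := DFunLike.congr_fun key f
  simp only [AlgHom.comp_apply, Ideal.Quotient.mkₐ_eq_mk] at this
  rwa [Ideal.Quotient.eq, Ideal.mem_span_singleton] at this

/-- A polynomial that cuts out the image of a retraction onto a coordinate space is prime. -/
lemma prime_of_retraction {φ : MvPolynomial (Fin 3) F →ₐ[F] MvPolynomial (Fin 3) F}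
    {ℓ : MvPolynomial (Fin 3) F} (hne : ℓ ≠ 0) (hφ : φ ℓ = 0) (h0 : ℓ ∣ X 0 - φ (X 0))
    (h1 : ℓ ∣ X 1 - φ (X 1)) (h2 : ℓ ∣ X 2 - φ (X 2)) : Prime ℓ := by
  have key : ∀ f, φ f = 0 → ℓ ∣ f := fun f hf ↦ by
    simpa [hf] using dvd_sub_of_dvd_sub_vars h0 h1 h2 f
  refine ⟨hne, fun hu ↦ ?_, fun a b hab ↦ ?_⟩
  · have := hu.map φ
    rw [hφ] at this
    exact not_isUnit_zero this
  · obtain ⟨g, hg⟩ := hab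
    have : φ a * φ b = 0 := by rw [← map_mul, hg, map_mul, hφ, zero_mul]
    exact (mul_eq_zero.1 this).imp (key a) (key b)

lemma flipHom_σP (c : F) (f : MvPolynomial (Fin 3) F) :
    flipHom F (σP F c f) = σP F (-c) (flipHom F f) := by
  refine DFunLike.congr_fun (algHom_eq_of_vars (φ := (flipHom F).comp (σP F c))
    (ψ := (σP F (-c)).comp (flipHom F)) ?_ ?_ ?_) f <;> simp <;> ring

lemma flipHom_τA (f : MvPolynomial (Fin 3) F) :
    flipHom F (τA F f) = τA F (flipHom F f) := by
  refine DFunLike.congr_fun (algHom_eq_of_vars (φ := (flipHom F).comp (τA F))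
    (ψ := (τA F).comp (flipHom F)) ?_ ?_ ?_) f <;> simp

lemma flipHom_flipHom (f : MvPolynomial (Fin 3) F) : flipHom F (flipHom F f) = f := by
  refine DFunLike.congr_fun (algHom_eq_of_vars (φ := (flipHom F).comp (flipHom F))
    (ψ := AlgHom.id F _) ?_ ?_ ?_) f <;> simp

lemma flipHom_torusHom (m : F) (f : MvPolynomial (Fin 3) F) :
    flipHom F (torusHom F m f) = torusHom F m (flipHom F f) := by
  refine DFunLike.congr_fun (algHom_eq_of_vars (φ := (flipHom F).comp (torusHom F m))
    (ψ := (torusHom F m).comp (flipHom F)) ?_ ?_ ?_) f <;> simp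

lemma τA_τA (f : MvPolynomial (Fin 3) F) : τA F (τA F f) = f := by
  refine DFunLike.congr_fun (algHom_eq_of_vars (φ := (τA F).comp (τA F))
    (ψ := AlgHom.id F _) ?_ ?_ ?_) f <;> simp

lemma torusHom_σP {m : F} (hm : m ≠ 0) (c : F) (f : MvPolynomial (Fin 3) F) :
    torusHom F m (σP F c f) = σP F (c * m) (torusHom F m f) := by
  have h : (C m * C m⁻¹ : MvPolynomial (Fin 3) F) = 1 := by rw [← C_mul, mul_inv_cancel₀ hm, C_1]
  refine DFunLike.congr_fun (algHom_eq_of_vars (φ := (torusHom F m).comp (σP F c))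
    (ψ := (σP F (c * m)).comp (torusHom F m)) ?_ ?_ ?_) f
  · simp
  · simp; ring
  · simp
    linear_combination (-2 * C c * X 1 - C c ^ 2 * C m * X 0) * h

lemma τA_torusHom (m : F) (f : MvPolynomial (Fin 3) F) :
    τA F (torusHom F m f) = torusHom F m⁻¹ (τA F f) := by
  refine DFunLike.congr_fun (algHom_eq_of_vars (φ := (τA F).comp (torusHom F m))
    (ψ := (torusHom F m⁻¹).comp (τA F)) ?_ ?_ ?_) f <;> simp

lemma torusHom_torusHom (m l : F) (f : MvPolynomial (Fin 3) F) :
    torusHom F m (torusHom F l f) = torusHom F (m * l) f := by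
  refine DFunLike.congr_fun (algHom_eq_of_vars (φ := (torusHom F m).comp (torusHom F l))
    (ψ := torusHom F (m * l)) ?_ ?_ ?_) f <;> simp <;> ring

/-- The Weyl element as a product of unipotent ones. -/
lemma σP_τA_braid (f : MvPolynomial (Fin 3) F) :
    σP F 1 (τA F (σP F 1 (τA F (σP F 1 f)))) = τA F f := by
  refine DFunLike.congr_fun (algHom_eq_of_vars (φ := (σP F 1).comp ((τA F).comp ((σP F 1).comp
    ((τA F).comp (σP F 1))))) (ψ := τA F) ?_ ?_ ?_) f <;> simp <;> ring

/-- The split torus as a product of unipotent and Weyl elements. -/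
lemma torusHom_sq_eq {t : F} (ht : t ≠ 0) (f : MvPolynomial (Fin 3) F) :
    torusHom F (t ^ 2) f =
      τA F (σP F t⁻¹ (τA F (σP F t (τA F (σP F t⁻¹ f))))) := by
  have h : (C t * C t⁻¹ : MvPolynomial (Fin 3) F) = 1 := by rw [← C_mul, mul_inv_cancel₀ ht, C_1]
  refine DFunLike.congr_fun (algHom_eq_of_vars (φ := torusHom F (t ^ 2)) (ψ := (τA F).comp
    ((σP F t⁻¹).comp ((τA F).comp ((σP F t).comp ((τA F).comp (σP F t⁻¹)))))) ?_ ?_ ?_) f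
  all_goals
    simp [← inv_pow]
    generalize (C t⁻¹ : MvPolynomial (Fin 3) F) = s at *
    generalize (C t : MvPolynomial (Fin 3) F) = u at *
    grind

/-- The reflection in the linear form `a2 - k·a0`. -/
lemma dvd_sub_reflection {k : F} (hk : k ≠ 0) (f : MvPolynomial (Fin 3) F) :
    (X 2 - C k * X 0 : MvPolynomial (Fin 3) F) ∣
      f - flipHom F (τA F (torusHom F k⁻¹ f)) := by
  have h : (C k * C k⁻¹ : MvPolynomial (Fin 3) F) = 1 := by rw [← C_mul, mul_inv_cancel₀ hk, C_1]
  refine dvd_sub_of_dvd_sub_vars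
    (φ := (flipHom F).comp ((τA F).comp (torusHom F k⁻¹))) ?_ ?_ ?_ f
  · exact ⟨-C k⁻¹, by simp; linear_combination (-X 0) * h⟩
  · simp
  · simp

lemma dvd_sub_flipHom (f : MvPolynomial (Fin 3) F) : X 1 ∣ f - flipHom F f := by
  refine dvd_sub_of_dvd_sub_vars ?_ ?_ ?_ f
  · simp
  · exact ⟨2, by simp; ring⟩
  · simp

lemma dvd_sub_restrictHom (f : MvPolynomial (Fin 3) F) : X 0 ∣ f - restrictHom F f :=
  dvd_sub_of_dvd_sub_vars (by simp) (by simp) (by simp) f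

end Substitutions

section LinearForms

variable (F : Type*) {Fq : Type*} [Field F] [Field Fq] [Algebra Fq F]

/-- The linear form `a2 + 2c·a1 + (c² - k)·a0`, of discriminant `4k`. -/
noncomputable def discForm (c k : Fq) : MvPolynomial (Fin 3) F :=
  X 2 + C (2 * algebraMap Fq F c) * X 1 + C (algebraMap Fq F c ^ 2 - algebraMap Fq F k) * X 0

/-- The linear form `a1 + c·a0`. -/
noncomputable def slopeForm (c : Fq) : MvPolynomial (Fin 3) F :=
  X 1 + C (algebraMap Fq F c) * X 0

lemma discForm_eq (c k : Fq) : discForm F c k =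
    X 2 + (C (algebraMap Fq F c) * X 1 + C (algebraMap Fq F c) * X 1) +
      (C (algebraMap Fq F c) ^ 2 - C (algebraMap Fq F k)) * X 0 := by
  simp [discForm, two_mul, add_mul]

lemma prime_discForm (c k : Fq) : Prime (discForm F c k) := by
  refine prime_of_retraction (φ := aeval ![X 0, X 1, X 2 - discForm F c k]) ?_ ?_ ?_ ?_ ?_
  · intro h
    simpa [discForm] using congrArg (eval ![0, 0, 1]) h
  · simp [discForm, algebraMap_eq]
    ring
  · simp
  · simp
  · simp

lemma prime_slopeForm (c : Fq) : Prime (slopeForm F c) := by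
  refine prime_of_retraction (φ := aeval ![X 0, X 1 - slopeForm F c, X 2]) ?_ ?_ ?_ ?_ ?_
  · intro h
    simpa [slopeForm] using congrArg (eval ![0, 1, 0]) h
  · simp [slopeForm, algebraMap_eq]
  · simp
  · simp
  · simp

lemma isRelPrime_of_eval {ℓ ℓ' : MvPolynomial (Fin 3) F} (hℓ : Prime ℓ) (x : Fin 3 → F)
    (hx : eval x ℓ = 0) (hx' : eval x ℓ' ≠ 0) : IsRelPrime ℓ ℓ' := by
  rw [hℓ.irreducible.isRelPrime_iff_not_dvd]
  rintro ⟨g, rfl⟩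
  simp [hx] at hx'

lemma isRelPrime_discForm (h2 : (2 : F) ≠ 0) {c k c' k' : Fq} (h : c ≠ c' ∨ k ≠ k') :
    IsRelPrime (discForm F c k) (discForm F c' k') := by
  by_cases hc : c = c'
  · subst hc
    have hk : k ≠ k' := by simpa using h
    refine isRelPrime_of_eval F (prime_discForm F c k)
      ![1, 0, algebraMap Fq F k - algebraMap Fq F c ^ 2] ?_ ?_
    · simp [discForm]
    · simpa [discForm, sub_eq_zero] using hk
  · refine isRelPrime_of_eval F (prime_discForm F c k) ![0, 1, -(2 * algebraMap Fq F c)] ?_ ?_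
    · simp [discForm]
    · simp only [discForm, map_add, eval_X, map_mul, eval_C, Matrix.cons_val]
      have : algebraMap Fq F c' - algebraMap Fq F c ≠ 0 := by
        simpa [sub_eq_zero] using Ne.symm hc
      have := mul_ne_zero h2 this
      intro h
      apply this
      linear_combination h

lemma isRelPrime_slopeForm {c c' : Fq} (h : c ≠ c') :
    IsRelPrime (slopeForm F c) (slopeForm F c') := by
  refine isRelPrime_of_eval F (prime_slopeForm F c) ![1, -algebraMap Fq F c, 0] ?_ ?_
  · simp [slopeForm]
  · simpa [slopeForm, neg_add_eq_sub, sub_eq_zero] using Ne.symm h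

lemma isRelPrime_slopeForm_discForm (c c' k' : Fq) :
    IsRelPrime (slopeForm F c) (discForm F c' k') := by
  refine isRelPrime_of_eval F (prime_slopeForm F c) ![0, 0, 1] ?_ ?_ <;>
    simp [slopeForm, discForm]

lemma isRelPrime_X_zero_discForm (c k : Fq) :
    IsRelPrime (X 0 : MvPolynomial (Fin 3) F) (discForm F c k) := by
  refine isRelPrime_of_eval F X_prime ![0, 0, 1] ?_ ?_ <;>
    simp [discForm]

lemma σP_discForm (b c k : Fq) :
    σP F (algebraMap Fq F b) (discForm F c k) = discForm F (c + b) k := by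
  simp [discForm_eq]; ring

lemma σP_slopeForm (b c : Fq) :
    σP F (algebraMap Fq F b) (slopeForm F c) = slopeForm F (c + b) := by
  simp [slopeForm]; ring

lemma flipHom_discForm (c k : Fq) : flipHom F (discForm F c k) = discForm F (-c) k := by
  simp [discForm_eq]

lemma flipHom_slopeForm (c : Fq) : flipHom F (slopeForm F c) = -slopeForm F (-c) := by
  simp [slopeForm]; ring

lemma torusHom_discForm {m : Fq} (hm : m ≠ 0) (c k : Fq) :
    torusHom F (algebraMap Fq F m) (discForm F c k) =
      C (algebraMap Fq F m⁻¹) * discForm F (c * m) (k * m ^ 2) := by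
  have h : (C (algebraMap Fq F m⁻¹) * C (algebraMap Fq F m) : MvPolynomial (Fin 3) F) = 1 := by
    rw [← C_mul, ← map_mul, inv_mul_cancel₀ hm, map_one, C_1]
  simp [discForm_eq] at h ⊢
  generalize (C (algebraMap Fq F m)⁻¹ : MvPolynomial (Fin 3) F) = s at *
  grind

lemma torusHom_slopeForm (m c : Fq) :
    torusHom F (algebraMap Fq F m) (slopeForm F c) = slopeForm F (c * m) := by
  simp [slopeForm]; ring

lemma τA_X_zero_eq_discForm : τA F (X 0) = discForm F (0 : Fq) 0 := by
  simp [discForm]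

lemma τA_discForm {c k : Fq} (h : c ^ 2 - k ≠ 0) :
    τA F (discForm F c k) = C (algebraMap Fq F (c ^ 2 - k)) *
      discForm F (-c / (c ^ 2 - k)) (k / (c ^ 2 - k) ^ 2) := by
  have e1 : (c ^ 2 - k) * (-c / (c ^ 2 - k)) = -c := by field_simp
  have e2 : (c ^ 2 - k) * ((-c / (c ^ 2 - k)) ^ 2 - k / (c ^ 2 - k) ^ 2) = 1 := by
    field_simp
  have e1' := congrArg (fun x ↦ (C (algebraMap Fq F x) : MvPolynomial (Fin 3) F)) e1
  have e2' := congrArg (fun x ↦ (C (algebraMap Fq F x) : MvPolynomial (Fin 3) F)) e2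
  simp only [map_mul, map_sub, map_pow, map_neg, map_one] at e1' e2'
  simp only [discForm_eq, map_add, map_sub, map_mul, map_pow, τA_X_zero, τA_X_one, τA_X_two, τA_C]
  linear_combination (-2 * X 1) * e1' - X 0 * e2'

lemma τA_discForm_sq (h2 : (2 : Fq) ≠ 0) {c : Fq} (h : c ≠ 0) :
    τA F (discForm F c (c ^ 2)) = C (algebraMap Fq F (-2 * c)) * slopeForm F (-1 / (2 * c)) := by
  have e1 : (-2 * c) * (-1 / (2 * c)) = 1 := by field_simp
  have e1' := congrArg (fun x ↦ (C (algebraMap Fq F x) : MvPolynomial (Fin 3) F)) e1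
  have e2 : (-2 * c) = -(c + c) := by ring
  rw [e2] at e1' ⊢
  simp only [map_mul, map_add, map_neg, map_one] at e1'
  simp only [discForm_eq, slopeForm, map_add, map_sub, map_mul, map_pow, map_neg, τA_X_zero,
    τA_X_one, τA_X_two, τA_C]
  linear_combination - X 0 * e1'

lemma τA_slopeForm (h2 : (2 : Fq) ≠ 0) {c : Fq} (h : c ≠ 0) :
    τA F (slopeForm F c) =
      C (algebraMap Fq F c) * discForm F (-1 / (2 * c)) ((1 / (2 * c)) ^ 2) := by
  have e1 : c * (-1 / (2 * c) + -1 / (2 * c)) = -1 := by field_simp; ring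
  have e2 : (-1 / (2 * c)) ^ 2 - (1 / (2 * c)) ^ 2 = 0 := by ring
  have e1' := congrArg (fun x ↦ (C (algebraMap Fq F x) : MvPolynomial (Fin 3) F)) e1
  have e2' := congrArg (fun x ↦ (C (algebraMap Fq F x) : MvPolynomial (Fin 3) F)) e2
  simp only [map_mul, map_sub, map_add, map_pow, map_neg, map_one, map_zero] at e1' e2'
  simp only [discForm_eq, slopeForm, map_add, map_mul, map_pow, τA_X_zero, τA_X_one, τA_C]
  linear_combination (-X 1) * e1' - C (algebraMap Fq F c) * X 0 * e2'

lemma τA_slopeForm_zero : τA F (slopeForm F (0 : Fq)) = -slopeForm F (0 : Fq) := by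
  simp [slopeForm]

lemma isHomogeneous_discForm (c k : Fq) : (discForm F c k).IsHomogeneous 1 :=
  ((isHomogeneous_X F 2).add (isHomogeneous_C_mul_X _ 1)).add (isHomogeneous_C_mul_X _ 0)

lemma restrictHom_discForm (c k : Fq) :
    restrictHom F (discForm F c k) = restrictHom F (discForm F c 0) := by
  simp [discForm]

end LinearForms

section Products

variable (F : Type*) {Fq : Type*} [Field F] [Field Fq] [Fintype Fq] [Algebra Fq F]

/-- The product of the linear forms `a2 + 2c·a1 + (c² - k)·a0` over all `c` and all `k ∈ K`. -/
noncomputable def discProd (K : Finset Fq) : MvPolynomial (Fin 3) F :=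
  ∏ k ∈ K, ∏ c : Fq, discForm F c k

variable (Fq) in
/-- The product of the linear forms `a1 + c·a0` over all `c`. -/
noncomputable def slopeProd : MvPolynomial (Fin 3) F := ∏ c : Fq, slopeForm F c

lemma discForm_dvd_discProd {K : Finset Fq} {k : Fq} (hk : k ∈ K) (c : Fq) :
    discForm F c k ∣ discProd F K :=
  (Finset.dvd_prod_of_mem (fun c ↦ discForm F c k) (Finset.mem_univ c)).trans
    (Finset.dvd_prod_of_mem (fun k ↦ ∏ c : Fq, discForm F c k) hk)

lemma slopeForm_dvd_slopeProd (c : Fq) : slopeForm F c ∣ slopeProd F Fq :=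
  Finset.dvd_prod_of_mem (fun c ↦ slopeForm F c) (Finset.mem_univ c)

lemma discProd_ne_zero (K : Finset Fq) : discProd F K ≠ 0 :=
  Finset.prod_ne_zero_iff.2 fun k _ ↦ Finset.prod_ne_zero_iff.2 fun c _ ↦
    (prime_discForm F c k).ne_zero

lemma slopeProd_ne_zero : slopeProd F Fq ≠ 0 :=
  Finset.prod_ne_zero_iff.2 fun c _ ↦ (prime_slopeForm F c).ne_zero

lemma discProd_dvd (h2 : (2 : F) ≠ 0) {K : Finset Fq} {f : MvPolynomial (Fin 3) F}
    (h : ∀ k ∈ K, ∀ c, discForm F c k ∣ f) : discProd F K ∣ f := by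
  refine Finset.prod_dvd_of_isRelPrime (fun k _ k' _ hkk ↦ ?_) fun k hk ↦
    Fintype.prod_dvd_of_isRelPrime (fun c c' hcc ↦ ?_) (h k hk)
  · exact IsRelPrime.prod_left fun c _ ↦ IsRelPrime.prod_right fun c' _ ↦
      isRelPrime_discForm F h2 (Or.inr hkk)
  · exact isRelPrime_discForm F h2 (Or.inl hcc)

lemma slopeProd_mul_discProd_dvd (h2 : (2 : F) ≠ 0) {K : Finset Fq} {f : MvPolynomial (Fin 3) F}
    (h : ∀ c : Fq, slopeForm F c ∣ f) (h' : ∀ k ∈ K, ∀ c, discForm F c k ∣ f) :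
    slopeProd F Fq * discProd F K ∣ f := by
  refine IsRelPrime.mul_dvd ?_ (Fintype.prod_dvd_of_isRelPrime
    (fun c c' hcc ↦ isRelPrime_slopeForm F hcc) h) (discProd_dvd F h2 h')
  exact IsRelPrime.prod_left fun c _ ↦ IsRelPrime.prod_right fun k _ ↦
    IsRelPrime.prod_right fun c' _ ↦ isRelPrime_slopeForm_discForm F c c' k

lemma X_zero_mul_discProd_dvd (h2 : (2 : F) ≠ 0) {K : Finset Fq} {f : MvPolynomial (Fin 3) F}
    (h : X 0 ∣ f) (h' : ∀ k ∈ K, ∀ c, discForm F c k ∣ f) :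
    X 0 * discProd F K ∣ f := by
  refine IsRelPrime.mul_dvd ?_ h (discProd_dvd F h2 h')
  exact IsRelPrime.prod_right fun k _ ↦ IsRelPrime.prod_right fun c' _ ↦
    isRelPrime_X_zero_discForm F c' k

lemma σP_discProd (b : Fq) (K : Finset Fq) :
    σP F (algebraMap Fq F b) (discProd F K) = discProd F K := by
  simp only [discProd, map_prod, σP_discForm]
  exact Finset.prod_congr rfl fun k _ ↦
    Fintype.prod_equiv (Equiv.addRight b) _ _ fun c ↦ rfl

lemma σP_slopeProd (b : Fq) : σP F (algebraMap Fq F b) (slopeProd F Fq) = slopeProd F Fq := by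
  simp only [slopeProd, map_prod, σP_slopeForm]
  exact Fintype.prod_equiv (Equiv.addRight b) _ _ fun c ↦ rfl

lemma flipHom_discProd (K : Finset Fq) : flipHom F (discProd F K) = discProd F K := by
  simp only [discProd, map_prod, flipHom_discForm]
  exact Finset.prod_congr rfl fun k _ ↦
    Fintype.prod_equiv (Equiv.neg Fq) _ _ fun c ↦ rfl

lemma flipHom_slopeProd (hodd : Odd (Fintype.card Fq)) :
    flipHom F (slopeProd F Fq) = -slopeProd F Fq := by
  simp only [slopeProd, map_prod, flipHom_slopeForm]
  rw [Finset.prod_neg, Finset.card_univ, hodd.neg_one_pow, neg_one_mul, neg_inj]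
  exact Fintype.prod_equiv (Equiv.neg Fq) _ _ fun c ↦ rfl

lemma torusHom_discProd {m : Fq} (hm : m ≠ 0) (K : Finset Fq)
    (hK : ∀ k, k * m ^ 2 ∈ K ↔ k ∈ K) :
    torusHom F (algebraMap Fq F m) (discProd F K) =
      C (algebraMap Fq F (m⁻¹ ^ K.card)) * discProd F K := by
  simp only [discProd, map_prod, torusHom_discForm F hm, Finset.prod_mul_distrib,
    Finset.prod_const, Finset.card_univ]
  refine congrArg₂ (· * ·) ?_ ?_
  · rw [← C_pow, ← C_pow, ← map_pow, ← map_pow, FiniteField.pow_card]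
  · refine Finset.prod_equiv (Equiv.mulRight₀ (m ^ 2) (pow_ne_zero 2 hm))
      (fun k ↦ (hK k).symm) fun k _ ↦ ?_
    exact Fintype.prod_equiv (Equiv.mulRight₀ m hm) _ _ fun c ↦ rfl

lemma torusHom_slopeProd {m : Fq} (hm : m ≠ 0) :
    torusHom F (algebraMap Fq F m) (slopeProd F Fq) = slopeProd F Fq := by
  simp only [slopeProd, map_prod, torusHom_slopeForm]
  exact Fintype.prod_equiv (Equiv.mulRight₀ m hm) _ _ fun c ↦ rfl

lemma isHomogeneous_discProd (K : Finset Fq) :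
    (discProd F K).IsHomogeneous (∑ _k ∈ K, ∑ _c : Fq, 1) :=
  IsHomogeneous.prod _ _ _ fun k _ ↦ IsHomogeneous.prod _ _ _ fun c _ ↦
    isHomogeneous_discForm F c k

lemma restrictHom_discProd (K : Finset Fq) :
    restrictHom F (discProd F K) = (restrictHom F (discProd F ({0} : Finset Fq))) ^ K.card := by
  simp only [discProd, map_prod, restrictHom_discForm F _ (_ : Fq), Finset.prod_const,
    Finset.prod_singleton]

end Products

section Squares

lemma isSquare_mul_sq_iff {K : Type*} [Field K] {k m : K} (hm : m ≠ 0) :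
    IsSquare (k * m ^ 2) ↔ IsSquare k := by
  refine ⟨fun h ↦ ?_, fun h ↦ h.mul (IsSquare.sq m)⟩
  have := h.mul (IsSquare.sq m⁻¹)
  rwa [mul_assoc, ← mul_pow, mul_inv_cancel₀ hm, one_pow, mul_one] at this

variable (Fq : Type*) [Field Fq] [Fintype Fq]

/-- The nonzero squares of a finite field. -/
noncomputable def nonzeroSquares : Finset Fq := Finset.univ.filter fun k ↦ k ≠ 0 ∧ IsSquare k

/-- The nonsquares of a finite field. -/
noncomputable def nonSquares : Finset Fq := Finset.univ.filter fun k ↦ k ≠ 0 ∧ ¬ IsSquare k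

variable {Fq}

lemma mem_nonzeroSquares {k : Fq} : k ∈ nonzeroSquares Fq ↔ k ≠ 0 ∧ IsSquare k := by
  simp [nonzeroSquares]

lemma mem_nonSquares {k : Fq} : k ∈ nonSquares Fq ↔ ¬ IsSquare k := by
  simp only [nonSquares, Finset.mem_filter, Finset.mem_univ, true_and, and_iff_right_iff_imp]
  rintro h rfl
  exact h IsSquare.zero

lemma mul_sq_mem_nonzeroSquares_iff {k m : Fq} (hm : m ≠ 0) :
    k * m ^ 2 ∈ nonzeroSquares Fq ↔ k ∈ nonzeroSquares Fq := by
  simp [mem_nonzeroSquares, isSquare_mul_sq_iff hm, hm]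

lemma mul_sq_mem_nonSquares_iff {k m : Fq} (hm : m ≠ 0) :
    k * m ^ 2 ∈ nonSquares Fq ↔ k ∈ nonSquares Fq := by
  simp [mem_nonSquares, isSquare_mul_sq_iff hm]

lemma isSquare_mul_of_not_isSquare (h2 : ringChar Fq ≠ 2) {a b : Fq} (ha : ¬ IsSquare a)
    (hb : ¬ IsSquare b) : IsSquare (a * b) := by
  have ha0 : a ≠ 0 := by rintro rfl; exact ha IsSquare.zero
  have hb0 : b ≠ 0 := by rintro rfl; exact hb IsSquare.zero
  rw [FiniteField.isSquare_iff h2 ha0] at ha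
  rw [FiniteField.isSquare_iff h2 hb0] at hb
  rw [FiniteField.isSquare_iff h2 (mul_ne_zero ha0 hb0), mul_pow,
    (FiniteField.pow_dichotomy h2 ha0).resolve_left ha,
    (FiniteField.pow_dichotomy h2 hb0).resolve_left hb]
  ring

lemma card_nonzeroSquares_eq (h2 : ringChar Fq ≠ 2) :
    (nonzeroSquares Fq).card = (nonSquares Fq).card := by
  obtain ⟨a, ha⟩ := FiniteField.exists_nonsquare h2
  have ha0 : a ≠ 0 := by rintro rfl; exact ha IsSquare.zero
  refine Finset.card_equiv (Equiv.mulRight₀ a ha0) fun k ↦ ?_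
  simp only [mem_nonzeroSquares, mem_nonSquares, Equiv.mulRight₀_apply]
  constructor
  · rintro ⟨hk0, t, rfl⟩ h
    rw [mul_comm, ← pow_two, isSquare_mul_sq_iff (by rintro rfl; simp at hk0)] at h
    exact ha h
  · intro h
    refine ⟨by rintro rfl; simp at h, ?_⟩
    by_contra hk
    exact h (isSquare_mul_of_not_isSquare h2 hk ha)

lemma card_nonSquares (h2 : ringChar Fq ≠ 2) :
    (nonSquares Fq).card + (nonSquares Fq).card = Fintype.card Fq - 1 := by
  nth_rewrite 1 [← card_nonzeroSquares_eq h2]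
  rw [← Finset.card_univ, ← Finset.card_erase_of_mem (Finset.mem_univ (0 : Fq)),
    ← Finset.card_union_of_disjoint]
  · congr 1
    ext k
    simp only [Finset.mem_union, mem_nonzeroSquares, mem_nonSquares, Finset.mem_erase,
      Finset.mem_univ, and_true]
    constructor
    · rintro (h | h)
      · exact h.1
      · rintro rfl
        exact h IsSquare.zero
    · intro h
      by_cases hk : IsSquare k
      · exact Or.inl ⟨h, hk⟩
      · exact Or.inr hk
  · rw [Finset.disjoint_left]
    intro k hk hk'
    exact mem_nonSquares.1 hk' (mem_nonzeroSquares.1 hk).2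

lemma inv_pow_card_nonSquares (h2 : ringChar Fq ≠ 2) {m : Fq} (hm : ¬ IsSquare m) :
    m⁻¹ ^ (nonSquares Fq).card = -1 := by
  have hm0 : m ≠ 0 := by rintro rfl; exact hm IsSquare.zero
  have hodd := FiniteField.odd_card_of_char_ne_two h2
  have hcard : (nonSquares Fq).card = Fintype.card Fq / 2 := by
    have := card_nonSquares h2
    omega
  rw [FiniteField.isSquare_iff h2 hm0] at hm
  rw [hcard, inv_pow, (FiniteField.pow_dichotomy h2 hm0).resolve_left hm]
  norm_num

end Squares

section SemiInvariants

variable {F : Type*} {Fq : Type*} [Field F] [Field Fq] [Algebra Fq F]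

/-- An `SL₂(F_q)`-invariant polynomial on which the full orthogonal group acts by signs: the
reflection `a1 ↦ -a1` by `ε` and the torus elements attached to nonsquares by `δ`. -/
structure IsSemiInvariant (Fq : Type*) [Field Fq] [Algebra Fq F] (ε δ : F)
    (f : MvPolynomial (Fin 3) F) : Prop where
  unipotent : ∀ c : Fq, σP F (algebraMap Fq F c) f = f
  weyl : τA F f = f
  flip : flipHom F f = C ε * f
  torus : ∀ m : Fq, ¬ IsSquare m → torusHom F (algebraMap Fq F m) f = C δ * f

lemma torusHom_eq_self_of_isSquare {f : MvPolynomial (Fin 3) F}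
    (hσ : ∀ c : Fq, σP F (algebraMap Fq F c) f = f) (hτ : τA F f = f) {m : Fq} (hm : m ≠ 0)
    (hsq : IsSquare m) : torusHom F (algebraMap Fq F m) f = f := by
  obtain ⟨t, rfl⟩ := hsq
  have ht : t ≠ 0 := by rintro rfl; simp at hm
  rw [← pow_two, map_pow, torusHom_sq_eq (by simpa using ht), ← map_inv₀, hσ, hτ, hσ, hτ, hσ, hτ]

/-- A nonzero `P` that is fixed by the unipotent element and divides its Weyl translate is fixed
by the Weyl element. -/
lemma τA_eq_self_of_dvd {P : MvPolynomial (Fin 3) F} (hP : P ≠ 0) (hσ : σP F 1 P = P)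
    (hdvd : P ∣ τA F P) : τA F P = P := by
  obtain ⟨g, hg⟩ := hdvd
  have h1 : g * τA F g = 1 := by
    have := τA_τA P
    rw [hg, map_mul, hg, mul_assoc] at this
    exact mul_left_cancel₀ hP (this.trans (mul_one P).symm)
  obtain ⟨u, hu, rfl⟩ := isUnit_iff_eq_C_of_isReduced.1 (IsUnit.of_mul_eq_one _ h1)
  have h2 := σP_τA_braid P
  rw [hσ, hg, map_mul, hσ, σP_C, map_mul, hg, τA_C, map_mul, map_mul, hσ, σP_C, mul_assoc] at h2
  have h3 : (C u * C u : MvPolynomial (Fin 3) F) = C u := mul_left_cancel₀ hP h2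
  have h4 : (C u : MvPolynomial (Fin 3) F) = 1 :=
    mul_left_cancel₀ (by simpa using hu.ne_zero) (h3.trans (mul_one _).symm)
  rw [hg, h4, mul_one]

lemma dvd_of_dvd_sub_neg (h2 : (2 : F) ≠ 0) {ℓ f : MvPolynomial (Fin 3) F}
    (h : ℓ ∣ f - C (-1) * f) : ℓ ∣ f := by
  refine (h.mul_left (C 2⁻¹)).trans (dvd_of_eq ?_)
  have : (C 2⁻¹ * (1 + 1) : MvPolynomial (Fin 3) F) = 1 := by
    rw [← C_1, ← C_add, ← C_mul, one_add_one_eq_two, inv_mul_cancel₀ h2]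
  rw [C_neg, C_1]
  linear_combination f * this

namespace IsSemiInvariant

lemma congr_sign {ε δ ε' δ' : F} {f : MvPolynomial (Fin 3) F} (h : IsSemiInvariant Fq ε δ f)
    (hε : ε = ε') (hδ : δ = δ') : IsSemiInvariant Fq ε' δ' f := hε ▸ hδ ▸ h

lemma const (a : F) : IsSemiInvariant Fq 1 1 (C a) :=
  ⟨by simp, by simp, by simp, by simp⟩

lemma add {ε δ : F} {f g : MvPolynomial (Fin 3) F} (hf : IsSemiInvariant Fq ε δ f)
    (hg : IsSemiInvariant Fq ε δ g) : IsSemiInvariant Fq ε δ (f + g) where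
  unipotent c := by rw [map_add, hf.unipotent, hg.unipotent]
  weyl := by rw [map_add, hf.weyl, hg.weyl]
  flip := by rw [map_add, hf.flip, hg.flip, mul_add]
  torus m hm := by rw [map_add, hf.torus m hm, hg.torus m hm, mul_add]

lemma mul {ε δ ε' δ' : F} {f g : MvPolynomial (Fin 3) F} (hf : IsSemiInvariant Fq ε δ f)
    (hg : IsSemiInvariant Fq ε' δ' g) : IsSemiInvariant Fq (ε * ε') (δ * δ') (f * g) where
  unipotent c := by rw [map_mul, hf.unipotent, hg.unipotent]
  weyl := by rw [map_mul, hf.weyl, hg.weyl]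
  flip := by rw [map_mul, hf.flip, hg.flip, C_mul]; ring
  torus m hm := by rw [map_mul, hf.torus m hm, hg.torus m hm, C_mul]; ring

lemma sub {ε δ : F} {f g : MvPolynomial (Fin 3) F} (hf : IsSemiInvariant Fq ε δ f)
    (hg : IsSemiInvariant Fq ε δ g) : IsSemiInvariant Fq ε δ (f - g) where
  unipotent c := by rw [map_sub, hf.unipotent, hg.unipotent]
  weyl := by rw [map_sub, hf.weyl, hg.weyl]
  flip := by rw [map_sub, hf.flip, hg.flip, mul_sub]
  torus m hm := by rw [map_sub, hf.torus m hm, hg.torus m hm, mul_sub]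

/-- Quotients of semi-invariants are semi-invariant. -/
lemma of_mul {ε δ ε' δ' : F} {f g : MvPolynomial (Fin 3) F} (hf : IsSemiInvariant Fq ε δ f)
    (hf0 : f ≠ 0) (hε : ε ≠ 0) (hδ : δ ≠ 0)
    (hfg : IsSemiInvariant Fq (ε * ε') (δ * δ') (f * g)) : IsSemiInvariant Fq ε' δ' g where
  unipotent c := by
    have := hfg.unipotent c
    rw [map_mul, hf.unipotent] at this
    exact mul_left_cancel₀ hf0 this
  weyl := by
    have := hfg.weyl
    rw [map_mul, hf.weyl] at this
    exact mul_left_cancel₀ hf0 this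
  flip := by
    have := hfg.flip
    rw [map_mul, hf.flip, C_mul] at this
    refine mul_left_cancel₀ (mul_ne_zero (C_ne_zero.2 hε) hf0) ?_
    linear_combination this
  torus m hm := by
    have := hfg.torus m hm
    rw [map_mul, hf.torus m hm, C_mul] at this
    refine mul_left_cancel₀ (mul_ne_zero (C_ne_zero.2 hδ) hf0) ?_
    linear_combination this

lemma torus_one {ε : F} {f : MvPolynomial (Fin 3) F} (hf : IsSemiInvariant Fq ε 1 f) {m : Fq}
    (hm : m ≠ 0) : torusHom F (algebraMap Fq F m) f = f := by
  by_cases h : IsSquare m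
  · exact torusHom_eq_self_of_isSquare hf.unipotent hf.weyl hm h
  · simpa using hf.torus m h

lemma discForm_dvd_of_torus (h2 : (2 : F) ≠ 0) {ε δ δ' : F} {f : MvPolynomial (Fin 3) F}
    (hf : IsSemiInvariant Fq ε δ f) {k : Fq} (hk : k ≠ 0)
    (ht : torusHom F (algebraMap Fq F k⁻¹) f = C δ' * f) (hs : δ' * ε = -1) (c : Fq) :
    discForm F c k ∣ f := by
  have h := dvd_sub_reflection (k := algebraMap Fq F k) (by simpa using hk) f
  rw [← map_inv₀, ht, map_mul, τA_C, hf.weyl, map_mul, flipHom_C, hf.flip, ← mul_assoc, ← C_mul,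
    hs] at h
  have h' : X 2 - C (algebraMap Fq F k) * X 0 ∣ f := dvd_of_dvd_sub_neg h2 h
  have e : X 2 - C (algebraMap Fq F k) * X 0 = discForm F (0 : Fq) k := by
    simp [discForm, sub_eq_add_neg]
  have := map_dvd (σP F (algebraMap Fq F c)) h'
  rwa [e, σP_discForm, zero_add, hf.unipotent] at this

lemma slopeForm_dvd (h2 : (2 : F) ≠ 0) {δ : F} {f : MvPolynomial (Fin 3) F}
    (hf : IsSemiInvariant Fq (-1) δ f) (c : Fq) : slopeForm F c ∣ f := by
  have h := dvd_sub_flipHom f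
  rw [hf.flip] at h
  have h' : X 1 ∣ f := dvd_of_dvd_sub_neg h2 h
  have e : X 1 = slopeForm F (0 : Fq) := by simp [slopeForm]
  have := map_dvd (σP F (algebraMap Fq F c)) h'
  rwa [e, σP_slopeForm, zero_add, hf.unipotent] at this

lemma discForm_zero_dvd {ε δ : F} {f : MvPolynomial (Fin 3) F} (hf : IsSemiInvariant Fq ε δ f)
    (h : X 0 ∣ f) (c : Fq) : discForm F c 0 ∣ f := by
  have h1 := map_dvd (τA F) h
  rw [hf.weyl, τA_X_zero_eq_discForm F (Fq := Fq)] at h1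
  have := map_dvd (σP F (algebraMap Fq F c)) h1
  rwa [σP_discForm, zero_add, hf.unipotent] at this

end IsSemiInvariant

end SemiInvariants

section Generators

lemma dvd_τA_of_τA_dvd {F : Type*} [Field F] {ℓ P : MvPolynomial (Fin 3) F} (h : τA F ℓ ∣ P) :
    ℓ ∣ τA F P := by
  simpa [τA_τA] using map_dvd (τA F) h

lemma isSemiInvariant_disc (F Fq : Type*) [Field F] [Field Fq] [Algebra Fq F] :
    IsSemiInvariant Fq 1 1 (X 1 ^ 2 - X 0 * X 2 : MvPolynomial (Fin 3) F) where
  unipotent c := by simp; ring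
  weyl := by simp; ring
  flip := by simp
  torus m hm := by
    have hm0 : m ≠ 0 := by rintro rfl; exact hm IsSquare.zero
    have h : (C (algebraMap Fq F m) * C (algebraMap Fq F m)⁻¹ : MvPolynomial (Fin 3) F) = 1 := by
      rw [← C_mul, mul_inv_cancel₀ (by simpa using hm0), C_1]
    simp
    linear_combination (X 0 * X 2) * h

variable (F Fq : Type*) [Field F] [Field Fq] [Fintype Fq] [Algebra Fq F]

/-- The product of the isotropic linear forms. -/
noncomputable def isotropicProd : MvPolynomial (Fin 3) F := X 0 * discProd F ({0} : Finset Fq)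

/-- The product of the linear forms of nonsquare discriminant. -/
noncomputable def minusProd : MvPolynomial (Fin 3) F := discProd F (nonSquares Fq)

/-- The product of the linear forms of nonzero square discriminant. -/
noncomputable def plusProd : MvPolynomial (Fin 3) F :=
  slopeProd F Fq * discProd F (nonzeroSquares Fq)

lemma isotropicProd_ne_zero : isotropicProd F Fq ≠ 0 :=
  mul_ne_zero (X_ne_zero 0) (discProd_ne_zero F _)

lemma minusProd_ne_zero : minusProd F Fq ≠ 0 := discProd_ne_zero F _

lemma plusProd_ne_zero : plusProd F Fq ≠ 0 :=
  mul_ne_zero (slopeProd_ne_zero F) (discProd_ne_zero F _)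

lemma τA_discForm_dvd_discProd {K : Finset Fq} (hK : ∀ k m : Fq, m ≠ 0 → (k * m ^ 2 ∈ K ↔ k ∈ K))
    {c k : Fq} (hk : k ∈ K) (h : c ^ 2 - k ≠ 0) :
    τA F (discForm F c k) ∣ discProd F K := by
  rw [τA_discForm F h]
  have hu : IsUnit (C (algebraMap Fq F (c ^ 2 - k)) : MvPolynomial (Fin 3) F) :=
    (IsUnit.mk0 _ (by rwa [Ne, map_eq_zero])).map C
  rw [hu.mul_left_dvd]
  refine discForm_dvd_discProd F ?_ _
  have := (hK k (c ^ 2 - k)⁻¹ (inv_ne_zero h)).2 hk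
  rwa [inv_pow, ← div_eq_mul_inv] at this

lemma isSemiInvariant_minusProd (h2 : (2 : F) ≠ 0) (hc : ringChar Fq ≠ 2) :
    IsSemiInvariant Fq 1 (-1) (minusProd F Fq) where
  unipotent c := σP_discProd F c _
  weyl := by
    refine τA_eq_self_of_dvd (minusProd_ne_zero F Fq) ?_ (discProd_dvd F h2 fun k hk c ↦ ?_)
    · rw [minusProd, ← map_one (algebraMap Fq F), σP_discProd]
    · refine dvd_τA_of_τA_dvd (τA_discForm_dvd_discProd F Fq
        (fun k m hm ↦ mul_sq_mem_nonSquares_iff hm) hk fun h ↦ mem_nonSquares.1 hk ?_)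
      rw [← sub_eq_zero.1 h]
      exact IsSquare.sq c
  flip := by rw [minusProd, flipHom_discProd, C_1, one_mul]
  torus m hm := by
    have hm0 : m ≠ 0 := by rintro rfl; exact hm IsSquare.zero
    rw [minusProd, torusHom_discProd F hm0 _ fun k ↦ mul_sq_mem_nonSquares_iff hm0,
      inv_pow_card_nonSquares hc hm, map_neg, map_one]

lemma isSemiInvariant_plusProd (h2 : (2 : F) ≠ 0) (h2' : (2 : Fq) ≠ 0) (hc : ringChar Fq ≠ 2) :
    IsSemiInvariant Fq (-1) (-1) (plusProd F Fq) where
  unipotent c := by rw [plusProd, map_mul, σP_slopeProd, σP_discProd]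
  weyl := by
    refine τA_eq_self_of_dvd (plusProd_ne_zero F Fq) ?_
      (slopeProd_mul_discProd_dvd F h2 (fun c ↦ ?_) fun k hk c ↦ ?_)
    · rw [plusProd, map_mul, ← map_one (algebraMap Fq F), σP_slopeProd, σP_discProd]
    · refine dvd_τA_of_τA_dvd ?_
      by_cases h : c = 0
      · rw [h, τA_slopeForm_zero, neg_dvd]
        exact (slopeForm_dvd_slopeProd F 0).mul_right _
      · have hu : IsUnit (C (algebraMap Fq F c) : MvPolynomial (Fin 3) F) :=
          (IsUnit.mk0 _ (by simpa using h)).map C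
        rw [τA_slopeForm F h2' h, hu.mul_left_dvd]
        refine (discForm_dvd_discProd F (mem_nonzeroSquares.2 ⟨?_, IsSquare.sq _⟩) _).mul_left _
        exact pow_ne_zero 2 (one_div_ne_zero (mul_ne_zero h2' h))
    · refine dvd_τA_of_τA_dvd ?_
      by_cases h : c ^ 2 - k = 0
      · obtain rfl := sub_eq_zero.1 h
        have h0 : c ≠ 0 := by
          rintro rfl
          simp [mem_nonzeroSquares] at hk
        have hu : IsUnit (C (algebraMap Fq F (-2 * c)) : MvPolynomial (Fin 3) F) :=
          (IsUnit.mk0 _ (by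
            rw [Ne, map_eq_zero]
            exact mul_ne_zero (neg_ne_zero.2 h2') h0)).map C
        rw [τA_discForm_sq F h2' h0, hu.mul_left_dvd]
        exact (slopeForm_dvd_slopeProd F _).mul_right _
      · exact (τA_discForm_dvd_discProd F Fq
          (fun k m hm ↦ mul_sq_mem_nonzeroSquares_iff hm) hk h).mul_left _
  flip := by
    rw [plusProd, map_mul, flipHom_discProd,
      flipHom_slopeProd F (Nat.odd_iff.2 (FiniteField.odd_card_of_char_ne_two hc)), C_neg, C_1]
    ring
  torus m hm := by
    have hm0 : m ≠ 0 := by rintro rfl; exact hm IsSquare.zero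
    rw [plusProd, map_mul, torusHom_slopeProd F hm0,
      torusHom_discProd F hm0 _ fun k ↦ mul_sq_mem_nonzeroSquares_iff hm0,
      card_nonzeroSquares_eq hc, inv_pow_card_nonSquares hc hm, map_neg, map_one]
    ring

lemma isSemiInvariant_isotropicProd (h2 : (2 : F) ≠ 0) :
    IsSemiInvariant Fq 1 1 (isotropicProd F Fq) where
  unipotent c := by rw [isotropicProd, map_mul, σP_discProd, σP_X_zero]
  weyl := by
    refine τA_eq_self_of_dvd (isotropicProd_ne_zero F Fq) ?_
      (X_zero_mul_discProd_dvd F h2 ?_ fun k hk c ↦ ?_)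
    · rw [isotropicProd, map_mul, ← map_one (algebraMap Fq F), σP_X_zero, σP_discProd]
    · refine dvd_τA_of_τA_dvd ?_
      rw [τA_X_zero_eq_discForm F (Fq := Fq)]
      exact (discForm_dvd_discProd F (Finset.mem_singleton_self 0) 0).mul_left _
    · refine dvd_τA_of_τA_dvd ?_
      obtain rfl := Finset.mem_singleton.1 hk
      by_cases h : c ^ 2 - 0 = 0
      · obtain rfl : c = 0 := by simpa using h
        rw [← τA_X_zero_eq_discForm F (Fq := Fq), τA_τA]
        exact Dvd.intro _ rfl
      · exact (τA_discForm_dvd_discProd F Fq (fun k m hm ↦ by simp [hm]) hk h).mul_left _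
  flip := by rw [isotropicProd, map_mul, flipHom_discProd, flipHom_X_zero, C_1, one_mul]
  torus m hm := by
    have hm0 : m ≠ 0 := by rintro rfl; exact hm IsSquare.zero
    rw [isotropicProd, map_mul, torusHom_X_zero, torusHom_discProd F hm0 _ fun k ↦ by simp [hm0],
      Finset.card_singleton, pow_one]
    have h : (C (algebraMap Fq F m) * C (algebraMap Fq F m⁻¹) : MvPolynomial (Fin 3) F) = 1 := by
      rw [← C_mul, ← map_mul, mul_inv_cancel₀ hm0, map_one, C_1]
    rw [C_1]
    linear_combination (X 0 * discProd F ({0} : Finset Fq)) * h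

end Generators

section Restriction

variable {F : Type*} [Field F]

lemma totalDegree_aeval_le {g : Fin 3 → MvPolynomial (Fin 3) F} (hg : ∀ i, (g i).totalDegree ≤ 1)
    (f : MvPolynomial (Fin 3) F) : (aeval g f).totalDegree ≤ f.totalDegree := by
  rw [aeval_def, eval₂_eq]
  refine totalDegree_finsetSum_le fun s hs ↦ (totalDegree_mul _ _).trans ?_
  rw [algebraMap_eq, totalDegree_C, zero_add]
  refine (totalDegree_finsetProd _ _).trans (le_trans ?_ (le_totalDegree hs))
  exact Finset.sum_le_sum fun i _ ↦ (totalDegree_pow _ _).trans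
    ((Nat.mul_le_mul_left _ (hg i)).trans (mul_one _).le)

lemma totalDegree_restrictHom_le (f : MvPolynomial (Fin 3) F) :
    (restrictHom F f).totalDegree ≤ f.totalDegree := by
  refine totalDegree_aeval_le (fun i ↦ ?_) f
  fin_cases i <;> simp

lemma restrictHom_restrictHom (f : MvPolynomial (Fin 3) F) :
    restrictHom F (restrictHom F f) = restrictHom F f := by
  refine DFunLike.congr_fun (algHom_eq_of_vars (φ := (restrictHom F).comp (restrictHom F))
    (ψ := restrictHom F) ?_ ?_ ?_) f <;> simp

lemma restrictHom_σP_restrictHom (c : F) (f : MvPolynomial (Fin 3) F) :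
    restrictHom F (σP F c (restrictHom F f)) = restrictHom F (σP F c f) := by
  refine DFunLike.congr_fun (algHom_eq_of_vars
    (φ := (restrictHom F).comp ((σP F c).comp (restrictHom F)))
    (ψ := (restrictHom F).comp (σP F c)) ?_ ?_ ?_) f <;> simp

lemma flipHom_restrictHom (f : MvPolynomial (Fin 3) F) :
    flipHom F (restrictHom F f) = restrictHom F (flipHom F f) := by
  refine DFunLike.congr_fun (algHom_eq_of_vars (φ := (flipHom F).comp (restrictHom F))
    (ψ := (restrictHom F).comp (flipHom F)) ?_ ?_ ?_) f <;> simp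

lemma torusHom_restrictHom (m : F) (f : MvPolynomial (Fin 3) F) :
    torusHom F m (restrictHom F f) = restrictHom F (torusHom F m f) := by
  refine DFunLike.congr_fun (algHom_eq_of_vars (φ := (torusHom F m).comp (restrictHom F))
    (ψ := (restrictHom F).comp (torusHom F m)) ?_ ?_ ?_) f <;> simp

lemma axisHom_axisHom (f : MvPolynomial (Fin 3) F) : axisHom F (axisHom F f) = axisHom F f := by
  refine DFunLike.congr_fun (algHom_eq_of_vars (φ := (axisHom F).comp (axisHom F))
    (ψ := axisHom F) ?_ ?_ ?_) f <;> simp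

lemma restrictHom_axisHom (f : MvPolynomial (Fin 3) F) :
    restrictHom F (axisHom F f) = axisHom F f := by
  refine DFunLike.congr_fun (algHom_eq_of_vars (φ := (restrictHom F).comp (axisHom F))
    (ψ := axisHom F) ?_ ?_ ?_) f <;> simp

lemma restrictHom_σP_axisHom (c : F) (f : MvPolynomial (Fin 3) F) :
    restrictHom F (σP F c (axisHom F f)) = axisHom F f := by
  refine DFunLike.congr_fun (algHom_eq_of_vars
    (φ := (restrictHom F).comp ((σP F c).comp (axisHom F))) (ψ := axisHom F) ?_ ?_ ?_) f <;> simp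

lemma flipHom_axisHom (f : MvPolynomial (Fin 3) F) :
    flipHom F (axisHom F f) = axisHom F (flipHom F f) := by
  refine DFunLike.congr_fun (algHom_eq_of_vars (φ := (flipHom F).comp (axisHom F))
    (ψ := (axisHom F).comp (flipHom F)) ?_ ?_ ?_) f <;> simp

lemma torusHom_axisHom (m : F) (f : MvPolynomial (Fin 3) F) :
    torusHom F m (axisHom F f) = axisHom F f := by
  refine DFunLike.congr_fun (algHom_eq_of_vars (φ := (torusHom F m).comp (axisHom F))
    (ψ := axisHom F) ?_ ?_ ?_) f <;> simp

lemma axisHom_torusHom (m : F) (f : MvPolynomial (Fin 3) F) :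
    axisHom F (torusHom F m f) = axisHom F f := by
  refine DFunLike.congr_fun (algHom_eq_of_vars (φ := (axisHom F).comp (torusHom F m))
    (ψ := axisHom F) ?_ ?_ ?_) f <;> simp

lemma X_two_dvd_sub_axisHom {f : MvPolynomial (Fin 3) F} (hf : restrictHom F f = f) :
    X 2 ∣ f - axisHom F f := by
  let φ : MvPolynomial (Fin 3) F →ₐ[F] MvPolynomial (Fin 3) F := aeval ![X 0, X 1, 0]
  have φ0 : φ (X 0) = X 0 := by simp [φ]
  have φ1 : φ (X 1) = X 1 := by simp [φ]
  have φ2 : φ (X 2) = 0 := by simp [φ]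
  have h := dvd_sub_of_dvd_sub_vars (φ := φ) (ℓ := X 2) (by simp [φ0]) (by simp [φ1])
    (by simp [φ2]) f
  have e : φ (restrictHom F f) = axisHom F f := by
    refine DFunLike.congr_fun (algHom_eq_of_vars
      (φ := φ.comp (restrictHom F)) (ψ := axisHom F) ?_ ?_ ?_) f <;> simp [φ1, φ2]
  rw [hf] at e
  rwa [← e]

/-- A polynomial on the line `a0 = a2 = 0` that is even extends to a polynomial in the quadratic
form, without increasing the degree. -/
lemma exists_disc_lift_axisHom {A : Subalgebra F (MvPolynomial (Fin 3) F)}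
    (hA : X 1 ^ 2 - X 0 * X 2 ∈ A) (h2 : (2 : F) ≠ 0) {h : MvPolynomial (Fin 3) F}
    (hflip : flipHom F h = h) :
    ∃ f ∈ A, f.totalDegree ≤ h.totalDegree ∧ restrictHom F f = axisHom F h := by
  let ψ : MvPolynomial (Fin 3) F →ₐ[F] Polynomial F := aeval ![0, Polynomial.X, 0]
  have hdeg : (ψ h).natDegree ≤ h.totalDegree := by
    have := aeval_natDegree_le h le_rfl ![0, (Polynomial.X : Polynomial F), 0] (n := 1)
      (fun i ↦ by fin_cases i <;> simp)
    simpa using this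
  have hodd : ∀ i, Odd i → (ψ h).coeff i = 0 := by
    intro i hi
    have e : (ψ h).comp (-Polynomial.X) = ψ (flipHom F h) :=
      DFunLike.congr_fun (algHom_eq_of_vars
        (φ := (Polynomial.aeval (-Polynomial.X : Polynomial F)).comp ψ)
        (ψ := ψ.comp (flipHom F)) (by simp [ψ]) (by simp [ψ]) (by simp [ψ])) h
    rw [hflip] at e
    have := congrArg (fun u ↦ Polynomial.coeff u i) e
    rw [← neg_one_mul (Polynomial.X : Polynomial F), ← Polynomial.C_1, ← Polynomial.C_neg] at this
    simp only [Polynomial.comp_C_mul_X_coeff, hi.neg_one_pow] at this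
    have h3 : 2 * (ψ h).coeff i = 0 := by linear_combination -this
    exact (mul_eq_zero.1 h3).resolve_left h2
  have haxis : axisHom F h = Polynomial.aeval (X 1 : MvPolynomial (Fin 3) F) (ψ h) :=
    DFunLike.congr_fun (algHom_eq_of_vars (φ := axisHom F)
      (ψ := (Polynomial.aeval (X 1 : MvPolynomial (Fin 3) F)).comp ψ)
      (by simp [ψ]) (by simp [ψ]) (by simp [ψ])) h
  refine ⟨∑ i ∈ Finset.range ((ψ h).natDegree + 1),
    (ψ h).coeff i • (X 1 ^ 2 - X 0 * X 2) ^ (i / 2), ?_, ?_, ?_⟩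
  · exact Subalgebra.sum_mem _ fun i _ ↦ Subalgebra.smul_mem _ (Subalgebra.pow_mem _ hA _) _
  · refine totalDegree_finsetSum_le fun i hi ↦ (totalDegree_smul_le _ _).trans ?_
    have hΔ : (X 1 ^ 2 - X 0 * X 2 : MvPolynomial (Fin 3) F).IsHomogeneous 2 :=
      (isHomogeneous_X_pow 1 2).sub ((isHomogeneous_X F 0).mul (isHomogeneous_X F 2))
    have := (hΔ.pow (i / 2)).totalDegree_le
    have := Finset.mem_range.1 hi
    omega
  · rw [haxis, Polynomial.aeval_eq_sum_range, map_sum]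
    refine Finset.sum_congr rfl fun i _ ↦ ?_
    rcases Nat.even_or_odd i with hi | hi
    · simp only [map_smul, map_pow, map_sub, map_mul, restrictHom_X_zero, restrictHom_X_one,
        zero_mul, sub_zero, ← pow_mul]
      rw [Nat.two_mul_div_two_of_even hi]
    · simp [hodd i hi]

variable {Fq : Type*} [Field Fq] [Algebra Fq F]

/-- The conditions satisfied by the restriction of an orthogonal invariant to `a0 = 0`. -/
structure IsRestrictedInvariant (Fq : Type*) [Field Fq] [Algebra Fq F]
    (h : MvPolynomial (Fin 3) F) : Prop where
  restrict : restrictHom F h = h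
  unipotent : ∀ c : Fq, restrictHom F (σP F (algebraMap Fq F c) h) = h
  flip : flipHom F h = h
  torus : ∀ m : Fq, m ≠ 0 → torusHom F (algebraMap Fq F m) h = h

lemma IsSemiInvariant.restrictHom {f : MvPolynomial (Fin 3) F} (hf : IsSemiInvariant Fq 1 1 f) :
    IsRestrictedInvariant Fq (restrictHom F f) where
  restrict := restrictHom_restrictHom f
  unipotent c := by rw [restrictHom_σP_restrictHom, hf.unipotent]
  flip := by rw [flipHom_restrictHom, hf.flip, C_1, one_mul]
  torus m hm := by rw [torusHom_restrictHom, hf.torus_one hm]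

namespace IsRestrictedInvariant

lemma axisHom {h : MvPolynomial (Fin 3) F} (hh : IsRestrictedInvariant Fq h) :
    IsRestrictedInvariant Fq (axisHom F h) where
  restrict := restrictHom_axisHom h
  unipotent c := restrictHom_σP_axisHom _ h
  flip := by rw [flipHom_axisHom, hh.flip]
  torus m _ := torusHom_axisHom _ h

lemma sub {g h : MvPolynomial (Fin 3) F} (hg : IsRestrictedInvariant Fq g)
    (hh : IsRestrictedInvariant Fq h) : IsRestrictedInvariant Fq (g - h) where
  restrict := by rw [map_sub, hg.restrict, hh.restrict]
  unipotent c := by rw [map_sub, map_sub, hg.unipotent, hh.unipotent]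
  flip := by rw [map_sub, hg.flip, hh.flip]
  torus m hm := by rw [map_sub, hg.torus m hm, hh.torus m hm]

lemma of_mul {g h : MvPolynomial (Fin 3) F} (hg : IsRestrictedInvariant Fq g) (hg0 : g ≠ 0)
    (hgh : IsRestrictedInvariant Fq (g * h)) : IsRestrictedInvariant Fq h where
  restrict := by
    have := hgh.restrict
    rw [map_mul, hg.restrict] at this
    exact mul_left_cancel₀ hg0 this
  unipotent c := by
    have := hgh.unipotent c
    rw [map_mul, map_mul, hg.unipotent] at this
    exact mul_left_cancel₀ hg0 this
  flip := by
    have := hgh.flip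
    rw [map_mul, hg.flip] at this
    exact mul_left_cancel₀ hg0 this
  torus m hm := by
    have := hgh.torus m hm
    rw [map_mul, hg.torus m hm] at this
    exact mul_left_cancel₀ hg0 this

variable [Fintype Fq]

lemma X_two_pow_dvd {g : MvPolynomial (Fin 3) F} (hg : IsRestrictedInvariant Fq g)
    (h0 : _root_.axisHom F g = 0) : ∀ j ≤ Fintype.card Fq - 1, X 2 ^ j ∣ g := by
  intro j
  induction j with
  | zero => simp
  | succ j ih =>
    intro hj
    obtain ⟨g', hg'⟩ := ih (by omega)
    have hX : (X 2 ^ j : MvPolynomial (Fin 3) F) ≠ 0 := pow_ne_zero _ (X_ne_zero 2)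
    have hres : restrictHom F g' = g' := by
      have := hg.restrict
      rw [hg', map_mul, map_pow, restrictHom_X_two] at this
      exact mul_left_cancel₀ hX this
    have haxis : _root_.axisHom F g' = 0 := by
      rcases Nat.eq_zero_or_pos j with rfl | hj0
      · simpa [hg'] using h0
      · have hnd : ¬ Fintype.card Fq - 1 ∣ j := fun h ↦ by
          have := Nat.le_of_dvd hj0 h
          omega
        rw [← FiniteField.forall_pow_eq_one_iff] at hnd
        push Not at hnd
        obtain ⟨m, hm⟩ := hnd
        have hm1 : algebraMap Fq F ((m⁻¹ : Fqˣ) : Fq) ^ j ≠ 1 := by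
          rw [← map_pow, Ne, map_eq_one_iff _ (algebraMap Fq F).injective]
          intro h
          apply hm
          rw [← inv_inj, inv_one, ← inv_pow]
          exact Units.ext (by simpa using h)
        have ht := hg.torus m m.ne_zero
        rw [hg', map_mul, map_pow, torusHom_X_two, mul_pow, ← map_inv₀, ← Units.val_inv_eq_inv_val,
          mul_comm (C _ ^ j), mul_assoc] at ht
        have ht' := congrArg (_root_.axisHom F) (mul_left_cancel₀ hX ht)
        rw [map_mul, axisHom_torusHom, map_pow, axisHom_C, ← C_pow] at ht'
        have : C (algebraMap Fq F ((m⁻¹ : Fqˣ) : Fq) ^ j - 1) * _root_.axisHom F g' = 0 := by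
          rw [C_sub, C_1]
          linear_combination ht'
        refine (mul_eq_zero.1 this).resolve_left ?_
        rw [C_eq_zero, sub_eq_zero]
        exact hm1
    have hd := X_two_dvd_sub_axisHom hres
    rw [haxis, sub_zero] at hd
    rw [hg', pow_succ]
    exact mul_dvd_mul_left _ hd

lemma restrictHom_minusProd_sq_dvd (h2 : (2 : F) ≠ 0) (hc : ringChar Fq ≠ 2)
    {g : MvPolynomial (Fin 3) F} (hg : IsRestrictedInvariant Fq g)
    (h0 : _root_.axisHom F g = 0) : restrictHom F (minusProd F Fq ^ 2) ∣ g := by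
  have hform : ∀ c : Fq, restrictHom F (discForm F c 0) = discForm F c (c ^ 2) := fun c ↦ by
    simp [discForm]
  rw [minusProd, map_pow, restrictHom_discProd, ← pow_mul, mul_two, card_nonSquares hc, discProd,
    Finset.prod_singleton, map_prod, ← Finset.prod_pow]
  simp only [hform]
  refine Fintype.prod_dvd_of_isRelPrime
    (fun c c' hcc ↦ (isRelPrime_discForm F h2 (Or.inl hcc)).pow) fun c ↦ ?_
  have h := map_dvd (restrictHom F)
    (map_dvd (σP F (algebraMap Fq F c)) (hg.X_two_pow_dvd h0 _ le_rfl))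
  have hX : (X 2 : MvPolynomial (Fin 3) F) = discForm F (0 : Fq) 0 := by simp [discForm]
  rwa [hg.unipotent, map_pow, map_pow, hX, σP_discForm, zero_add, hform] at h

end IsRestrictedInvariant

end Restriction

section OrthogonalInvariants

variable (F Fq : Type*) [Field F] [Field Fq] [Fintype Fq] [Algebra Fq F]

/-- The algebra generated by the invariants of the full orthogonal group. -/
noncomputable def orthogonalAlgebra : Subalgebra F (MvPolynomial (Fin 3) F) :=
  Algebra.adjoin F {X 1 ^ 2 - X 0 * X 2, isotropicProd F Fq, minusProd F Fq ^ 2}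

lemma disc_mem_orthogonalAlgebra : X 1 ^ 2 - X 0 * X 2 ∈ orthogonalAlgebra F Fq :=
  Algebra.subset_adjoin (by simp)

lemma isotropicProd_mem_orthogonalAlgebra : isotropicProd F Fq ∈ orthogonalAlgebra F Fq :=
  Algebra.subset_adjoin (by simp)

lemma minusProd_sq_mem_orthogonalAlgebra : minusProd F Fq ^ 2 ∈ orthogonalAlgebra F Fq :=
  Algebra.subset_adjoin (by simp)

variable {F Fq}

lemma isSemiInvariant_minusProd_sq (h2 : (2 : F) ≠ 0) (hc : ringChar Fq ≠ 2) :
    IsSemiInvariant Fq 1 1 (minusProd F Fq ^ 2) := by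
  have h := isSemiInvariant_minusProd F Fq h2 hc
  rw [pow_two]
  exact (h.mul h).congr_sign (one_mul 1) (by ring)

lemma isSemiInvariant_of_mem (h2 : (2 : F) ≠ 0) (hc : ringChar Fq ≠ 2)
    {f : MvPolynomial (Fin 3) F} (hf : f ∈ orthogonalAlgebra F Fq) :
    IsSemiInvariant Fq 1 1 f := by
  induction hf using Algebra.adjoin_induction with
  | mem x hx =>
    rcases hx with rfl | rfl | rfl
    exacts [isSemiInvariant_disc F Fq, isSemiInvariant_isotropicProd F Fq h2,
      isSemiInvariant_minusProd_sq h2 hc]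
  | algebraMap a => exact IsSemiInvariant.const a
  | add x y _ _ hx hy => exact hx.add hy
  | mul x y _ _ hx hy => exact (hx.mul hy).congr_sign (one_mul 1) (one_mul 1)

lemma restrictHom_discProd_ne_zero (K : Finset Fq) : restrictHom F (discProd F K) ≠ 0 := by
  have : restrictHom F (discProd F K) = ∏ _k ∈ K, ∏ c : Fq, discForm F c (c ^ 2) := by
    simp [discProd, discForm]
  rw [this]
  exact Finset.prod_ne_zero_iff.2 fun _ _ ↦ Finset.prod_ne_zero_iff.2 fun c _ ↦
    (prime_discForm F c _).ne_zero

lemma isHomogeneous_restrictHom_discProd (K : Finset Fq) :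
    (restrictHom F (discProd F K)).IsHomogeneous (∑ _k ∈ K, ∑ _c : Fq, 1) := by
  have : restrictHom F (discProd F K) = ∏ _k ∈ K, ∏ c : Fq, discForm F c (c ^ 2) := by
    simp [discProd, discForm]
  rw [this]
  exact IsHomogeneous.prod _ _ _ fun k _ ↦ IsHomogeneous.prod _ _ _ fun c _ ↦
    isHomogeneous_discForm F c _

/-- Every polynomial on `a0 = 0` with the symmetries of an orthogonal invariant extends to an
element of the algebra generated by the known invariants. -/
lemma IsRestrictedInvariant.exists_lift (h2 : (2 : F) ≠ 0) (hc : ringChar Fq ≠ 2)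
    {h : MvPolynomial (Fin 3) F} (hh : IsRestrictedInvariant Fq h) :
    ∃ f ∈ orthogonalAlgebra F Fq, f.totalDegree ≤ h.totalDegree ∧
      _root_.restrictHom F f = h := by
  induction hd : h.totalDegree using Nat.strong_induction_on generalizing h with
  | _ d ih =>
  subst hd
  obtain ⟨f₁, hf₁, hdeg₁, hres₁⟩ :=
    exists_disc_lift_axisHom (disc_mem_orthogonalAlgebra F Fq) h2 hh.flip
  have hg := hh.sub hh.axisHom
  by_cases hg0 : h - _root_.axisHom F h = 0
  · exact ⟨f₁, hf₁, hdeg₁, hres₁.trans (sub_eq_zero.1 hg0).symm⟩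
  obtain ⟨h₂, hh₂⟩ := hg.restrictHom_minusProd_sq_dvd h2 hc
    (by rw [map_sub, axisHom_axisHom, sub_self])
  have hΓ0 : _root_.restrictHom F (minusProd F Fq ^ 2) ≠ 0 := by
    rw [map_pow]
    exact pow_ne_zero 2 (restrictHom_discProd_ne_zero _)
  have hh₂0 : h₂ ≠ 0 := by
    rintro rfl
    rw [mul_zero] at hh₂
    exact hg0 hh₂
  have hinv : IsRestrictedInvariant Fq h₂ :=
    (isSemiInvariant_minusProd_sq h2 hc).restrictHom.of_mul hΓ0 (hh₂ ▸ hg)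
  have hD : (_root_.restrictHom F (minusProd F Fq ^ 2)).totalDegree =
      (∑ _k ∈ nonSquares Fq, ∑ _c : Fq, 1) * 2 := by
    refine IsHomogeneous.totalDegree ?_ hΓ0
    rw [map_pow]
    exact (isHomogeneous_restrictHom_discProd _).pow 2
  have hD' : (minusProd F Fq ^ 2).totalDegree ≤ (∑ _k ∈ nonSquares Fq, ∑ _c : Fq, 1) * 2 :=
    ((isHomogeneous_discProd F _).pow 2).totalDegree_le
  have hDpos : 0 < ∑ _k ∈ nonSquares Fq, ∑ _c : Fq, 1 := by
    obtain ⟨a, ha⟩ := FiniteField.exists_nonsquare hc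
    exact Finset.sum_pos (fun _ _ ↦ Finset.sum_pos (fun _ _ ↦ one_pos) Finset.univ_nonempty)
      ⟨a, mem_nonSquares.2 ha⟩
  have hgdeg : (h - _root_.axisHom F h).totalDegree ≤ h.totalDegree := by
    rw [← hres₁]
    exact (totalDegree_sub _ _).trans
      (max_le le_rfl ((totalDegree_restrictHom_le f₁).trans hdeg₁))
  rw [hh₂, totalDegree_mul_of_isDomain hΓ0 hh₂0, hD] at hgdeg
  obtain ⟨f₂, hf₂, hdeg₂, hres₂⟩ := ih h₂.totalDegree (by omega) hinv rfl
  refine ⟨f₁ + minusProd F Fq ^ 2 * f₂, add_mem hf₁ (mul_mem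
    (minusProd_sq_mem_orthogonalAlgebra F Fq) hf₂), ?_, ?_⟩
  · refine (totalDegree_add _ _).trans (max_le hdeg₁ ((totalDegree_mul _ _).trans ?_))
    omega
  · rw [map_add, map_mul, hres₁, hres₂, ← hh₂]
    ring

namespace IsSemiInvariant

lemma isotropicProd_dvd (h2 : (2 : F) ≠ 0) {ε δ : F} {f : MvPolynomial (Fin 3) F}
    (hf : IsSemiInvariant Fq ε δ f) (h0 : _root_.restrictHom F f = 0) :
    isotropicProd F Fq ∣ f := by
  have hX := dvd_sub_restrictHom f
  rw [h0, sub_zero] at hX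
  refine X_zero_mul_discProd_dvd F h2 hX fun k hk c ↦ ?_
  obtain rfl := Finset.mem_singleton.1 hk
  exact hf.discForm_zero_dvd hX c

lemma of_isotropicProd_mul (h2 : (2 : F) ≠ 0) {f : MvPolynomial (Fin 3) F}
    (hf : IsSemiInvariant Fq 1 1 (isotropicProd F Fq * f)) : IsSemiInvariant Fq 1 1 f :=
  (isSemiInvariant_isotropicProd F Fq h2).of_mul (isotropicProd_ne_zero F Fq) one_ne_zero
    one_ne_zero (hf.congr_sign (one_mul 1).symm (one_mul 1).symm)

/-- The invariants of the full orthogonal group. -/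
lemma mem_orthogonalAlgebra (h2 : (2 : F) ≠ 0) (hc : ringChar Fq ≠ 2)
    {f : MvPolynomial (Fin 3) F} (hf : IsSemiInvariant Fq 1 1 f) :
    f ∈ orthogonalAlgebra F Fq := by
  induction hd : f.totalDegree using Nat.strong_induction_on generalizing f with
  | _ d ih =>
  subst hd
  obtain ⟨f₁, hf₁, hdeg₁, hres₁⟩ := hf.restrictHom.exists_lift h2 hc
  have hg := hf.sub (isSemiInvariant_of_mem h2 hc hf₁)
  obtain ⟨g, hg'⟩ := hg.isotropicProd_dvd h2 (by rw [map_sub, hres₁, sub_self])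
  have hmem : g ∈ orthogonalAlgebra F Fq := by
    by_cases hg0 : g = 0
    · rw [hg0]
      exact zero_mem _
    refine ih g.totalDegree ?_ (of_isotropicProd_mul h2 (hg' ▸ hg)) rfl
    have hle : (f - f₁).totalDegree ≤ f.totalDegree := (totalDegree_sub _ _).trans
      (max_le le_rfl (hdeg₁.trans (totalDegree_restrictHom_le f)))
    have hpos : 1 ≤ (isotropicProd F Fq).totalDegree := by
      rw [isotropicProd, totalDegree_mul_of_isDomain (X_ne_zero 0) (discProd_ne_zero F _),
        totalDegree_X]
      omega
    rw [hg', totalDegree_mul_of_isDomain (isotropicProd_ne_zero F Fq) hg0] at hle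
    omega
  rw [← sub_add_cancel f f₁, hg']
  exact add_mem (mul_mem (isotropicProd_mem_orthogonalAlgebra F Fq) hmem) hf₁

lemma exists_minusProd_mul (h2 : (2 : F) ≠ 0) (hc : ringChar Fq ≠ 2)
    {f : MvPolynomial (Fin 3) F} (hf : IsSemiInvariant Fq 1 (-1) f) :
    ∃ g ∈ orthogonalAlgebra F Fq, f = minusProd F Fq * g := by
  have hdvd : minusProd F Fq ∣ f := by
    refine discProd_dvd F h2 fun k hk c ↦ ?_
    have hk' := mem_nonSquares.1 hk
    refine hf.discForm_dvd_of_torus h2 (δ' := -1) (by rintro rfl; exact hk' IsSquare.zero)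
      (hf.torus _ fun h ↦ hk' ?_) (mul_one _) c
    simpa using h
  obtain ⟨g, rfl⟩ := hdvd
  refine ⟨g, mem_orthogonalAlgebra h2 hc ?_, rfl⟩
  exact (isSemiInvariant_minusProd F Fq h2 hc).of_mul (minusProd_ne_zero F Fq) one_ne_zero
    (neg_ne_zero.2 one_ne_zero) (hf.congr_sign (one_mul 1).symm (mul_one _).symm)

lemma exists_plusProd_mul (h2 : (2 : F) ≠ 0) (h2' : (2 : Fq) ≠ 0) (hc : ringChar Fq ≠ 2)
    {δ : F} {f : MvPolynomial (Fin 3) F} (hf : IsSemiInvariant Fq (-1) δ f) :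
    ∃ g, IsSemiInvariant Fq 1 (-δ) g ∧ f = plusProd F Fq * g := by
  have hdvd : plusProd F Fq ∣ f := by
    refine slopeProd_mul_discProd_dvd F h2 (hf.slopeForm_dvd h2) fun k hk c ↦ ?_
    obtain ⟨hk0, hk'⟩ := mem_nonzeroSquares.1 hk
    refine hf.discForm_dvd_of_torus h2 (δ' := 1) hk0 ?_ (one_mul _) c
    rw [C_1, one_mul]
    exact torusHom_eq_self_of_isSquare hf.unipotent hf.weyl (inv_ne_zero hk0) (by simpa using hk')
  obtain ⟨g, rfl⟩ := hdvd
  refine ⟨g, ?_, rfl⟩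
  exact (isSemiInvariant_plusProd F Fq h2 h2' hc).of_mul (plusProd_ne_zero F Fq)
    (neg_ne_zero.2 one_ne_zero) (neg_ne_zero.2 one_ne_zero)
    (hf.congr_sign (by ring) (by ring))

end IsSemiInvariant

/-- Symmetrizing an invariant over the quotient of the orthogonal group by `SL₂(F_q)`. -/
lemma isSemiInvariant_symmetrization (hc : ringChar Fq ≠ 2) {f : MvPolynomial (Fin 3) F}
    (hσ : ∀ c : Fq, σP F (algebraMap Fq F c) f = f) (hτ : τA F f = f) {k : Fq}
    (hk : ¬ IsSquare k) {s t : F} (hs : s * s = 1) (ht : t * t = 1) :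
    IsSemiInvariant Fq s t ((f + C s * flipHom F f) +
      C t * torusHom F (algebraMap Fq F k) (f + C s * flipHom F f)) := by
  have hs' : (C s * C s : MvPolynomial (Fin 3) F) = 1 := by rw [← C_mul, hs, C_1]
  have ht' : (C t * C t : MvPolynomial (Fin 3) F) = 1 := by rw [← C_mul, ht, C_1]
  have hk0 : k ≠ 0 := fun h ↦ hk (h ▸ IsSquare.zero)
  have hflip : flipHom F (f + C s * flipHom F f) = C s * (f + C s * flipHom F f) := by
    rw [map_add, map_mul, flipHom_C, flipHom_flipHom]
    linear_combination (-flipHom F f) * hs'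
  have hσ' : ∀ c : Fq, σP F (algebraMap Fq F c) (f + C s * flipHom F f) =
      f + C s * flipHom F f := fun c ↦ by
    have := flipHom_σP (algebraMap Fq F (-c)) f
    rw [hσ, ← map_neg, neg_neg] at this
    rw [map_add, map_mul, σP_C, hσ, ← this]
  have hτ' : τA F (f + C s * flipHom F f) = f + C s * flipHom F f := by
    rw [map_add, map_mul, τA_C, hτ, ← flipHom_τA, hτ]
  generalize f + C s * flipHom F f = g at hflip hσ' hτ'
  have htorus : ∀ m : Fq, ¬ IsSquare m →
      torusHom F (algebraMap Fq F m) g = torusHom F (algebraMap Fq F k) g := fun m hm ↦ by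
    have hm0 : m ≠ 0 := fun h ↦ hm (h ▸ IsSquare.zero)
    have := torusHom_eq_self_of_isSquare hσ' hτ' (m := k⁻¹ * m)
      (mul_ne_zero (inv_ne_zero hk0) hm0)
      (isSquare_mul_of_not_isSquare hc (by simpa using hk) hm)
    have e := torusHom_torusHom (algebraMap Fq F k) (algebraMap Fq F (k⁻¹ * m)) g
    rwa [this, ← map_mul, mul_inv_cancel_left₀ hk0, eq_comm] at e
  refine ⟨fun c ↦ ?_, ?_, ?_, fun m hm ↦ ?_⟩
  · have := torusHom_σP (m := algebraMap Fq F k) (by simpa using hk0)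
      (algebraMap Fq F (c * k⁻¹)) g
    rw [hσ', ← map_mul, inv_mul_cancel_right₀ hk0] at this
    rw [map_add, map_mul, σP_C, hσ', ← this]
  · rw [map_add, map_mul, τA_C, τA_torusHom, hτ', ← map_inv₀, htorus k⁻¹ (by simpa using hk)]
  · rw [map_add, map_mul, flipHom_C, flipHom_torusHom, hflip, map_mul, torusHom_C]
    ring
  · have := torusHom_eq_self_of_isSquare hσ' hτ' (m := m * k)
      (mul_ne_zero (fun h ↦ hm (h ▸ IsSquare.zero)) hk0) (isSquare_mul_of_not_isSquare hc hm hk)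
    rw [map_add, map_mul, torusHom_C, torusHom_torusHom, ← map_mul, this, htorus m hm]
    linear_combination -ht' * torusHom F (algebraMap Fq F k) g

/-- Every `SL₂(F_q)`-invariant lies in any algebra containing the generators. -/
lemma mem_of_invariant (h2 : (2 : F) ≠ 0) (h2' : (2 : Fq) ≠ 0) (hc : ringChar Fq ≠ 2)
    {A : Subalgebra F (MvPolynomial (Fin 3) F)} (hA : orthogonalAlgebra F Fq ≤ A)
    (hm : minusProd F Fq ∈ A) (hp : plusProd F Fq ∈ A) {f : MvPolynomial (Fin 3) F}
    (hσ : ∀ c : Fq, σP F (algebraMap Fq F c) f = f) (hτ : τA F f = f) : f ∈ A := by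
  obtain ⟨k, hk⟩ := FiniteField.exists_nonsquare hc
  have hminus : ∀ {g : MvPolynomial (Fin 3) F}, IsSemiInvariant Fq 1 (-1) g → g ∈ A := by
    intro g hg
    obtain ⟨u, hu, rfl⟩ := hg.exists_minusProd_mul h2 hc
    exact mul_mem hm (hA hu)
  have key : ∀ s t : F, (s = 1 ∨ s = -1) → (t = 1 ∨ t = -1) →
      (f + C s * flipHom F f) +
        C t * torusHom F (algebraMap Fq F k) (f + C s * flipHom F f) ∈ A := by
    intro s t hs ht
    have h := isSemiInvariant_symmetrization hc hσ hτ hk (s := s) (t := t)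
      (by rcases hs with rfl | rfl <;> ring) (by rcases ht with rfl | rfl <;> ring)
    generalize (f + C s * flipHom F f) +
      C t * torusHom F (algebraMap Fq F k) (f + C s * flipHom F f) = g at h
    rcases hs with rfl | rfl
    · rcases ht with rfl | rfl
      · exact hA (h.mem_orthogonalAlgebra h2 hc)
      · exact hminus h
    · obtain ⟨u, hu, rfl⟩ := h.exists_plusProd_mul h2 h2' hc
      refine mul_mem hp ?_
      rcases ht with rfl | rfl
      · exact hminus hu
      · rw [neg_neg] at hu
        exact hA (hu.mem_orthogonalAlgebra h2 hc)
  have hsum := add_mem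
    (add_mem (key 1 1 (.inl rfl) (.inl rfl)) (key 1 (-1) (.inl rfl) (.inr rfl)))
    (add_mem (key (-1) 1 (.inr rfl) (.inl rfl)) (key (-1) (-1) (.inr rfl) (.inr rfl)))
  have h4 := A.smul_mem hsum (2⁻¹ * 2⁻¹ : F)
  convert h4 using 1
  have h1 : (C 2⁻¹ * (1 + 1) : MvPolynomial (Fin 3) F) = 1 := by
    rw [← C_1, ← C_add, ← C_mul, one_add_one_eq_two, inv_mul_cancel₀ h2]
  rw [smul_eq_C_mul, C_mul, C_neg, C_1]
  linear_combination (-f * C 2⁻¹ * (1 + 1) - f) * h1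

lemma restrictHom_plusProd_sq (hc : ringChar Fq ≠ 2) :
    restrictHom F (plusProd F Fq ^ 2) =
      restrictHom F ((X 1 ^ 2 - X 0 * X 2) ^ Fintype.card Fq * minusProd F Fq ^ 2) := by
  have h : restrictHom F (slopeProd F Fq) = X 1 ^ Fintype.card Fq := by
    simp [slopeProd, slopeForm]
  rw [plusProd, minusProd, map_pow, map_mul, map_mul, map_pow, map_pow, h,
    restrictHom_discProd F (nonzeroSquares Fq), restrictHom_discProd F (nonSquares Fq),
    card_nonzeroSquares_eq hc]
  simp only [map_sub, map_mul, map_pow, restrictHom_X_zero, restrictHom_X_one, zero_mul, sub_zero]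
  ring

/-- The relation between the generators of the `SL₂(F_q)`-invariants. -/
lemma exists_plusProd_sq_eq (h2 : (2 : F) ≠ 0) (h2' : (2 : Fq) ≠ 0) (hc : ringChar Fq ≠ 2) :
    ∃ g ∈ orthogonalAlgebra F Fq, plusProd F Fq ^ 2 =
      (X 1 ^ 2 - X 0 * X 2) ^ Fintype.card Fq * minusProd F Fq ^ 2 + isotropicProd F Fq * g := by
  have hB := isSemiInvariant_plusProd F Fq h2 h2' hc
  have hB2 : IsSemiInvariant Fq 1 1 (plusProd F Fq ^ 2) := by
    rw [pow_two]
    exact (hB.mul hB).congr_sign (by ring) (by ring)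
  have hmem : (X 1 ^ 2 - X 0 * X 2) ^ Fintype.card Fq * minusProd F Fq ^ 2 ∈
      orthogonalAlgebra F Fq :=
    mul_mem (pow_mem (disc_mem_orthogonalAlgebra F Fq) _) (minusProd_sq_mem_orthogonalAlgebra F Fq)
  have hsub := hB2.sub (isSemiInvariant_of_mem h2 hc hmem)
  obtain ⟨g, hg⟩ := hsub.isotropicProd_dvd h2
    (by rw [map_sub, restrictHom_plusProd_sq hc, sub_self])
  refine ⟨g, (IsSemiInvariant.of_isotropicProd_mul h2 (hg ▸ hsub)).mem_orthogonalAlgebra h2 hc, ?_⟩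
  rw [← hg]
  ring

end OrthogonalInvariants

/-- `F[V]^{SL₂(F_q)}` is generated as an `F`-algebra by `Δ`, `J`, `Γ` and `B`, and there is a
polynomial `Φ` in three variables with `B² = Δ^q·Γ² + J·Φ(Δ, J, Γ)`; in particular `J` divides
`B² − Δ^q·Γ²`. -/
theorem SL2_invariants_generated (F : Type*) [Field F] (p n q : ℕ) (hp : p.Prime)
    (hp2 : p ≠ 2) [CharP F p] (hn : n ≠ 0) (hq : q = p ^ n)
    (Fq : Type*) [Field Fq] [Fintype Fq] [Algebra Fq F] (hcard : Fintype.card Fq = q)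
    (Δ β γ₀ Γ B J : MvPolynomial (Fin 3) F)
    (hΔ : Δ = X 1 ^ 2 - X 0 * X 2)
    (hβ : β = ∏ c : Fq, (X 1 + C (algebraMap Fq F c) * X 0))
    (hγ : γ₀ = ∏ c : Fq,
      (X 2 + C (2 * algebraMap Fq F c) * X 1 + C ((algebraMap Fq F c) ^ 2) * X 0))
    (hΓ : Γ = ∏ k ∈ Finset.univ.filter (fun k : Fq => k ≠ 0 ∧ ¬ IsSquare k),
      ∏ c : Fq, (X 2 + C (2 * algebraMap Fq F c) * X 1 +
        C ((algebraMap Fq F c) ^ 2 - algebraMap Fq F k) * X 0))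
    (hB : B = β * ∏ k ∈ Finset.univ.filter (fun k : Fq => k ≠ 0 ∧ IsSquare k),
      ∏ c : Fq, (X 2 + C (2 * algebraMap Fq F c) * X 1 +
        C ((algebraMap Fq F c) ^ 2 - algebraMap Fq F k) * X 0))
    (hJ : J = X 0 * γ₀) :
    {f : MvPolynomial (Fin 3) F |
        (∀ c : Fq, σP F (algebraMap Fq F c) f = f) ∧ τA F f = f} =
      ((Algebra.adjoin F {Δ, J, Γ, B} : Subalgebra F (MvPolynomial (Fin 3) F)) :
        Set (MvPolynomial (Fin 3) F)) ∧
    (∃ Φ : MvPolynomial (Fin 3) F,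
      B ^ 2 = Δ ^ q * Γ ^ 2 + J * aeval ![Δ, J, Γ] Φ) ∧
    J ∣ (B ^ 2 - Δ ^ q * Γ ^ 2) := by
  have h2 : (2 : F) ≠ 0 := by
    have : ((2 : ℕ) : F) ≠ 0 := by
      rw [Ne, CharP.cast_eq_zero_iff F p, Nat.prime_dvd_prime_iff_eq hp Nat.prime_two]
      exact hp2
    exact_mod_cast this
  have h2' : (2 : Fq) ≠ 0 := fun h ↦ h2 (by rw [← map_ofNat (algebraMap Fq F), h, map_zero])
  have hc : ringChar Fq ≠ 2 := fun h ↦ h2' (by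
    have := ringChar.Nat.cast_ringChar (R := Fq)
    rw [h] at this
    exact_mod_cast this)
  have hJ' : J = isotropicProd F Fq := by
    rw [hJ, hγ, isotropicProd, discProd, Finset.prod_singleton]
    simp [discForm]
  have hΓ' : Γ = minusProd F Fq := by
    rw [hΓ]
    rfl
  have hB' : B = plusProd F Fq := by
    rw [hB, hβ]
    rfl
  clear hJ hγ hΓ hB hβ
  subst hJ' hΓ' hB' hΔ
  rw [← hcard]
  obtain ⟨g, hg, hrel⟩ := exists_plusProd_sq_eq h2 h2' hc
  refine ⟨?_, ?_, g, by rw [hrel]; ring⟩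
  · ext f
    rw [Set.mem_ofPred_eq, SetLike.mem_coe]
    refine ⟨fun hf ↦ mem_of_invariant h2 h2' hc ?_ (Algebra.subset_adjoin (by simp))
      (Algebra.subset_adjoin (by simp)) hf.1 hf.2, fun hf ↦ ?_⟩
    · refine Algebra.adjoin_le ?_
      rintro x (rfl | rfl | rfl)
      exacts [Algebra.subset_adjoin (by simp), Algebra.subset_adjoin (by simp),
        pow_mem (Algebra.subset_adjoin (by simp)) 2]
    · induction hf using Algebra.adjoin_induction with
      | mem x hx =>
        rcases hx with rfl | rfl | rfl | rfl
        · exact ⟨(isSemiInvariant_disc F Fq).unipotent, (isSemiInvariant_disc F Fq).weyl⟩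
        · have h := isSemiInvariant_isotropicProd F Fq h2
          exact ⟨h.unipotent, h.weyl⟩
        · have h := isSemiInvariant_minusProd F Fq h2 hc
          exact ⟨h.unipotent, h.weyl⟩
        · have h := isSemiInvariant_plusProd F Fq h2 h2' hc
          exact ⟨h.unipotent, h.weyl⟩
      | algebraMap a => exact ⟨fun c ↦ AlgHom.commutes _ a, AlgHom.commutes _ a⟩
      | add x y _ _ hx hy =>
        exact ⟨fun c ↦ by rw [map_add, hx.1, hy.1], by rw [map_add, hx.2, hy.2]⟩
      | mul x y _ _ hx hy =>
        exact ⟨fun c ↦ by rw [map_mul, hx.1, hy.1], by rw [map_mul, hx.2, hy.2]⟩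
  · have hle : orthogonalAlgebra F Fq ≤
        (aeval (R := F) ![X 1 ^ 2 - X 0 * X 2, isotropicProd F Fq, minusProd F Fq]).range := by
      refine Algebra.adjoin_le ?_
      rintro x (rfl | rfl | rfl)
      exacts [⟨X 0, by simp⟩, ⟨X 1, by simp⟩, ⟨X 2 ^ 2, by simp⟩]
    obtain ⟨Φ, hΦ⟩ := hle hg
    exact ⟨Φ, by rw [hrel]; exact congrArg₂ _ rfl (congrArg₂ _ rfl hΦ.symm)⟩
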